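/- The positive-norm complex line in L ⊗ ℂ ≅ ℂ^{1,13} spanned by the Weyl vector ρ̄ = (Σ_{x∈𝒫} x + ξ Σ_{l∈ℒ} l)/26 is the unique point of the complex hyperbolic space ℂH¹³ fixed by the group Q. -/

import Mathlib

noncomputable section

open ComplexConjugate

namespace Bimonster

/-- The primitive cube root of unity `ω = e^{2πi/3}`. -/
def ω : ℂ := Complex.exp (2 * (Real.pi : ℂ) * Complex.I / 3)

/-- `θ = ω - ω̄ = √-3`. -/
def θ : ℂ := ω - conj ω

/-- `ξ = e^{-πi/6}`. -/
def ξ : ℂ := Complex.exp (-((Real.pi : ℂ) * Complex.I) / 6)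

/-- Membership in the ring of Eisenstein integers `ℰ = ℤ[ω] ⊆ ℂ`. -/
def EisP (z : ℂ) : Prop := ∃ a b : ℤ, z = (a : ℂ) + (b : ℂ) * ω

/-- The units of the ring of Eisenstein integers. -/
def EisUnit (z : ℂ) : Prop :=
  z = 1 ∨ z = -1 ∨ z = ω ∨ z = -ω ∨ z = ω ^ 2 ∨ z = -ω ^ 2

/-- The underlying 14-dimensional complex vector space of `L = 3E₈ ⊕ H`. -/
abbrev V : Type := Fin 14 → ℂ

/-- The Hermitian form of `L = 3E₈ ⊕ H`: negative definite standard form on the twelve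
`E₈`-coordinates, and the hyperbolic cell with Gram matrix `[[0, θ̄], [θ, 0]]` on the
last two coordinates.  It is conjugate-linear in the first variable. -/
def herm (u v : V) : ℂ :=
  -(∑ i : Fin 12, conj (u (Fin.castLE (by norm_num) i)) * v (Fin.castLE (by norm_num) i)) +
    conj (u 12) * conj θ * v 13 + conj (u 13) * θ * v 12

/-- First generator of the ternary tetracode `𝒞₄ ⊆ 𝔽₃⁴`. -/
def tet1 : Fin 4 → ℤ := ![1, 1, -1, 0]

/-- Second generator of the ternary tetracode `𝒞₄ ⊆ 𝔽₃⁴`. -/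
def tet2 : Fin 4 → ℤ := ![0, 1, 1, 1]

/-- The complex `E₈` lattice: vectors of `ℰ⁴` whose reduction mod `θ` lies in the
ternary tetracode. -/
def inE8 (w : Fin 4 → ℂ) : Prop :=
  (∀ i, EisP (w i)) ∧
    ∃ s t : ℤ, ∀ i : Fin 4, ∃ a b : ℤ,
      w i - ((tet1 i * s + tet2 i * t : ℤ) : ℂ) = θ * ((a : ℂ) + (b : ℂ) * ω)

/-- The lattice `L = 3E₈ ⊕ H` as a subset of `ℂ¹⁴`. -/
def Lset : Set V :=
  {v | (∀ k : Fin 3,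
      inE8 fun i : Fin 4 =>
        v ⟨4 * (k : ℕ) + (i : ℕ), by have hk := k.isLt; have hi := i.isLt; omega⟩) ∧
    EisP (v 12) ∧ EisP (v 13)}

/-- A root of `L`: a primitive lattice vector of norm `-3`. -/
def IsRoot (r : V) : Prop :=
  r ∈ Lset ∧ herm r r = -3 ∧
    ∀ α : ℂ, EisP α → ∀ y ∈ Lset, r = α • y → EisUnit α

/-- The `μ`-reflection in a vector `r`: `v ↦ v − (1−μ)·r·⟨r,v⟩/|r|²`. -/
def reflMap (μ : ℂ) (r v : V) : V := v - ((1 - μ) * herm r v / herm r r) • r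

/-- The automorphism group of the lattice `L`: invertible `ℂ`-linear maps preserving
the lattice and the Hermitian form. -/
def AutL : Subgroup (V ≃ₗ[ℂ] V) where
  carrier := {g | (∀ v : V, v ∈ Lset ↔ g v ∈ Lset) ∧ ∀ u v : V, herm (g u) (g v) = herm u v}
  one_mem' := ⟨fun _ => Iff.rfl, fun _ _ => rfl⟩
  mul_mem' := by
    rintro f g ⟨hf1, hf2⟩ ⟨hg1, hg2⟩
    refine ⟨fun v => ?_, fun u v => ?_⟩
    · exact (hg1 v).trans (hf1 (g v))
    · exact (hf2 (g u) (g v)).trans (hg2 u v)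
  inv_mem' := by
    rintro g ⟨hg1, hg2⟩
    refine ⟨fun v => ?_, fun u v => ?_⟩
    · have h := hg1 (g.symm v)
      have hv : g (g.symm v) = v := g.apply_symm_apply v
      rw [hv] at h
      exact h.symm
    · have h := hg2 (g.symm u) (g.symm v)
      have hu : g (g.symm u) = u := g.apply_symm_apply u
      have hv : g (g.symm v) = v := g.apply_symm_apply v
      rw [hu, hv] at h
      exact h.symm

/-- The set of elements of `Aut(L)` acting as the `ω`-reflection in some root
belonging to `S`. -/
def ReflAutos (S : Set V) : Set (V ≃ₗ[ℂ] V) :=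
  {g | g ∈ AutL ∧ ∃ r ∈ S, ∀ v, g v = reflMap ω r v}

/-- The reflection group `R(L)`: the subgroup of `Aut(L)` generated by the
`ω`-reflections in all roots of `L`. -/
def RL : Subgroup (V ≃ₗ[ℂ] V) := Subgroup.closure (ReflAutos {r | IsRoot r})

/-- Two roots are adjacent when `|⟨a,b⟩| = √3`, i.e. when their `ω`-reflections braid. -/
def Adj (a b : V) : Prop := ‖herm a b‖ = Real.sqrt 3

/-- A set of roots is connected if the graph given by adjacency on it is connected. -/
def ConnectedSet (Φ : Set V) : Prop :=
  ∀ a ∈ Φ, ∀ b ∈ Φ, Relation.ReflTransGen (fun x y => x ∈ Φ ∧ y ∈ Φ ∧ Adj x y) a b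

/-- `Rad Φ` is the radical of a set `Φ` of roots: the closure of `Φ` under reflecting
members of the set in each other (and identification of unit multiples). -/
inductive Rad (Φ : Set V) : V → Prop
  | base {r : V} : r ∈ Φ → Rad Φ r
  | refl {a b : V} : Rad Φ a → Rad Φ b → Rad Φ (reflMap ω a b)
  | inv {a b : V} : Rad Φ a → Rad Φ b → Rad Φ (reflMap (conj ω) a b)
  | unit {u : ℂ} {r : V} : EisUnit u → Rad Φ r → Rad Φ (u • r)

/-- Shorthand for the entry `-θω²` occurring in the coordinates of the 26 roots. -/
def qc : ℂ := -(θ * ω ^ 2)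

/- The 26 roots of the diagram `D` in the coordinate system `3E₈ ⊕ H`. -/

def rA : V := ![0, 0, 0, 0, 0, 0, 0, 0, 0, 0, 0, 0, 1, ω ^ 2]
def rC1 : V := ![qc, 0, 0, 0, 0, 0, 0, 0, 0, 0, 0, 0, 0, 0]
def rC2 : V := ![0, 0, 0, 0, qc, 0, 0, 0, 0, 0, 0, 0, 0, 0]
def rC3 : V := ![0, 0, 0, 0, 0, 0, 0, 0, qc, 0, 0, 0, 0, 0]
def rE1 : V := ![0, qc, 0, 0, 0, 0, 0, 0, 0, 0, 0, 0, 0, 0]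
def rE2 : V := ![0, 0, 0, 0, 0, qc, 0, 0, 0, 0, 0, 0, 0, 0]
def rE3 : V := ![0, 0, 0, 0, 0, 0, 0, 0, 0, qc, 0, 0, 0, 0]
def rA1 : V := ![0, 0, 0, 0, 0, 0, 0, qc, 0, 0, 0, qc, ω, ω ^ 2]
def rA2 : V := ![0, 0, 0, qc, 0, 0, 0, 0, 0, 0, 0, qc, ω, ω ^ 2]
def rA3 : V := ![0, 0, 0, qc, 0, 0, 0, qc, 0, 0, 0, 0, ω, ω ^ 2]
def rG1 : V := ![0, 0, 0, qc, 0, 0, -qc, qc, 0, 0, -qc, qc, 2 * ω, 2 * ω ^ 2]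
def rG2 : V := ![0, 0, -qc, qc, 0, 0, 0, qc, 0, 0, -qc, qc, 2 * ω, 2 * ω ^ 2]
def rG3 : V := ![0, 0, -qc, qc, 0, 0, -qc, qc, 0, 0, 0, qc, 2 * ω, 2 * ω ^ 2]
def rF : V := ![0, 1, 1, -2, 0, 1, 1, -2, 0, 1, 1, -2, -2 + ω, -θ]
def rB1 : V := ![1, 0, 1, -1, 0, 0, 0, 0, 0, 0, 0, 0, -1, 0]
def rB2 : V := ![0, 0, 0, 0, 1, 0, 1, -1, 0, 0, 0, 0, -1, 0]
def rB3 : V := ![0, 0, 0, 0, 0, 0, 0, 0, 1, 0, 1, -1, -1, 0]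
def rD1 : V := ![1, 1, -1, 0, 0, 0, 0, 0, 0, 0, 0, 0, 0, 0]
def rD2 : V := ![0, 0, 0, 0, 1, 1, -1, 0, 0, 0, 0, 0, 0, 0]
def rD3 : V := ![0, 0, 0, 0, 0, 0, 0, 0, 1, 1, -1, 0, 0, 0]
def rF1 : V := ![0, 1, 1, 1, 0, 0, 0, 0, 0, 0, 0, 0, 0, 0]
def rF2 : V := ![0, 0, 0, 0, 0, 1, 1, 1, 0, 0, 0, 0, 0, 0]
def rF3 : V := ![0, 0, 0, 0, 0, 0, 0, 0, 0, 1, 1, 1, 0, 0]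
def rZ1 : V := ![0, 1, 1, -2, 1, 0, 1, -1, 1, 0, 1, -1, qc, -θ]
def rZ2 : V := ![1, 0, 1, -1, 0, 1, 1, -2, 1, 0, 1, -1, qc, -θ]
def rZ3 : V := ![1, 0, 1, -1, 1, 0, 1, -1, 0, 1, 1, -2, qc, -θ]

/-- The 13 roots of `D` labelled by the points of `P²(𝔽₃)`. -/
def pt : Fin 13 → V :=
  ![rA, rC1, rC2, rC3, rE1, rE2, rE3, rA1, rA2, rA3, rG1, rG2, rG3]

/-- The 13 roots of `D` labelled by the lines of `P²(𝔽₃)`. -/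
def lnr : Fin 13 → V :=
  ![rF, rB1, rB2, rB3, rD1, rD2, rD3, rF1, rF2, rF3, rZ1, rZ2, rZ3]

/-- The 26 roots of the diagram `D` (the incidence graph of `P²(𝔽₃)`). -/
def D26 : Set V := Set.range pt ∪ Set.range lnr

/-- The 16 roots forming the `M₆₆₆` diagram. -/
def M16 : Set V :=
  Set.range
    (![rA, rB1, rB2, rB3, rC1, rC2, rC3, rD1, rD2, rD3, rE1, rE2, rE3, rF1, rF2, rF3] :
      Fin 16 → V)

/-- The 26 vectors `(ρ₁,…,ρ₂₆) = (x₁,…,x₁₃, ξl₁,…,ξl₁₃)`. -/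
def ρv : Fin 26 → V := fun i =>
  if h : (i : ℕ) < 13 then pt ⟨(i : ℕ), h⟩
  else ξ • lnr ⟨(i : ℕ) - 13, by have := i.isLt; omega⟩

/-- The Weyl vector `ρ̄ = (Σ points + ξ Σ lines)/26`. -/
def ρbar : V := (26 : ℂ)⁻¹ • ((∑ i : Fin 13, pt i) + ξ • ∑ i : Fin 13, lnr i)

/-- The height of a root: `ht(r) = |⟨ρ̄, r⟩| / |ρ̄|²`. -/
def ht (r : V) : ℝ := ‖herm ρbar r‖ / ‖herm ρbar ρbar‖

/-- The subgroup `G ≅ PGL₃(𝔽₃)` of `Aut(L)`: automorphisms of `L` preserving the set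
of 13 point roots and the set of 13 line roots of the diagram `D`. -/
def Gsub : Subgroup (V ≃ₗ[ℂ] V) where
  carrier := {g | g ∈ AutL ∧ (⇑g) '' Set.range pt = Set.range pt ∧
    (⇑g) '' Set.range lnr = Set.range lnr}
  one_mem' := by
    refine ⟨one_mem AutL, ?_, ?_⟩ <;> simp
  mul_mem' := by
    rintro f g ⟨hf0, hf1, hf2⟩ ⟨hg0, hg1, hg2⟩
    refine ⟨mul_mem hf0 hg0, ?_, ?_⟩
    · have hco : (⇑(f * g)) = (⇑f) ∘ (⇑g) := rfl
      rw [hco, Set.image_comp, hg1, hf1]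
    · have hco : (⇑(f * g)) = (⇑f) ∘ (⇑g) := rfl
      rw [hco, Set.image_comp, hg2, hf2]
  inv_mem' := by
    rintro g ⟨hg0, hg1, hg2⟩
    refine ⟨inv_mem hg0, ?_, ?_⟩
    · conv_lhs => rw [← hg1]
      rw [← Set.image_comp]
      have : (⇑g⁻¹ ∘ ⇑g) = id := by
        funext x; exact g.symm_apply_apply x
      rw [this, Set.image_id]
    · conv_lhs => rw [← hg2]
      rw [← Set.image_comp]
      have : (⇑g⁻¹ ∘ ⇑g) = id := by
        funext x; exact g.symm_apply_apply x
      rw [this, Set.image_id]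

/-- The defining properties of the automorphism `σ`: it is an automorphism of `L`
which, for the polarity `δ` of `P²(𝔽₃)` pairing each point `x = [a:b:c]` with the
line `l = {aX+bY+cZ = 0}`, sends the point root `x` to `-ω·l` and the line root `l`
to `x`. -/
def SigmaSpec (σ : V ≃ₗ[ℂ] V) : Prop :=
  σ ∈ AutL ∧ ∃ δ : Fin 13 ≃ Fin 13,
    (∀ i j, Adj (pt i) (lnr (δ j)) ↔ Adj (pt j) (lnr (δ i))) ∧
    (∀ i, σ (pt i) = (-ω) • lnr (δ i)) ∧
    (∀ i, σ (lnr (δ i)) = pt i)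

/-- The group `Q` generated by `G` and `σ`. -/
def QGroup (σ : V ≃ₗ[ℂ] V) : Subgroup (V ≃ₗ[ℂ] V) :=
  Subgroup.closure ({σ} ∪ (Gsub : Set (V ≃ₗ[ℂ] V)))

/-! ### The constants -/

lemma ω_eq : ω = -1 / 2 + (Real.sqrt 3 / 2 : ℝ) * Complex.I := by
  have h : (2 * (Real.pi : ℂ) * Complex.I / 3) = ((Real.pi - Real.pi / 3 : ℝ) : ℂ) * Complex.I := by
    push_cast; ring
  rw [ω, h, Complex.exp_mul_I, ← Complex.ofReal_cos, ← Complex.ofReal_sin, Real.cos_pi_sub,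
    Real.sin_pi_sub, Real.cos_pi_div_three, Real.sin_pi_div_three]
  push_cast; ring

lemma ξ_eq : ξ = (Real.sqrt 3 / 2 : ℝ) - (1 / 2) * Complex.I := by
  have h : (-((Real.pi : ℂ) * Complex.I) / 6) = ((-(Real.pi / 6) : ℝ) : ℂ) * Complex.I := by
    push_cast; ring
  rw [ξ, h, Complex.exp_mul_I, ← Complex.ofReal_cos, ← Complex.ofReal_sin, Real.cos_neg,
    Real.sin_neg, Real.cos_pi_div_six, Real.sin_pi_div_six]
  push_cast; ring

lemma s3 : ((Real.sqrt 3 : ℝ) : ℂ) ^ 2 = 3 := by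
  rw [← Complex.ofReal_pow, Real.sq_sqrt (by norm_num)]; norm_num

lemma ω_sq : ω ^ 2 = -1 - ω := by
  rw [ω_eq]; push_cast
  linear_combination (1 / 4 : ℂ) * Complex.I ^ 2 * s3 + (3 / 4 : ℂ) * Complex.I_sq

lemma conj_two : conj (2 : ℂ) = 2 := map_ofNat (starRingEnd ℂ) 2

lemma conj_ω : conj ω = -1 - ω := by
  rw [ω_eq]
  simp [Complex.conj_ofReal, conj_two]
  ring

lemma θ_eq : θ = 1 + 2 * ω := by
  rw [θ, conj_ω]; ring

lemma conj_θ : conj θ = -(1 + 2 * ω) := by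
  rw [θ_eq]; simp [conj_ω, conj_two]; ring

lemma θ_sq : θ ^ 2 = -3 := by
  rw [θ_eq]; linear_combination 4 * ω_sq

lemma θ_ne : θ ≠ 0 := by
  intro h; have := θ_sq; rw [h] at this; norm_num at this

lemma ω_ne : ω ≠ 0 := by
  intro h; have := ω_sq; rw [h] at this; norm_num at this

lemma qc_eq : qc = ω - 1 := by
  rw [qc, θ_eq, ω_sq]; linear_combination 2 * ω_sq

lemma ξ_sq : ξ ^ 2 = -ω := by
  rw [ξ_eq, ω_eq]; push_cast
  linear_combination (1 / 4 : ℂ) * s3 + (1 / 4 : ℂ) * Complex.I_sq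

lemma ξ_conj : conj ξ * ξ = 1 := by
  rw [ξ_eq]
  simp [Complex.conj_ofReal, conj_two]
  linear_combination (1 / 4 : ℂ) * s3 - (1 / 4 : ℂ) * Complex.I_sq

lemma ξ_ne : ξ ≠ 0 := Complex.exp_ne_zero _

/-! ### The Hermitian form -/

lemma herm_add_right (u v w : V) : herm u (v + w) = herm u v + herm u w := by
  simp only [herm, Pi.add_apply, mul_add, Finset.sum_add_distrib]; ring

lemma herm_smul_right (u : V) (c : ℂ) (v : V) : herm u (c • v) = c * herm u v := by
  simp only [herm, Pi.smul_apply, smul_eq_mul, mul_add, mul_neg, Finset.mul_sum]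
  congr 1
  · congr 1
    · congr 1
      exact Finset.sum_congr rfl fun i _ => by ring
    · ring
  · ring

lemma herm_conj (u v : V) : conj (herm u v) = herm v u := by
  simp only [herm, map_add, map_neg, map_sum, map_mul, Complex.conj_conj]
  have : ∀ i : Fin 12, u (Fin.castLE (by norm_num) i) * conj (v (Fin.castLE (by norm_num) i)) =
      conj (v (Fin.castLE (by norm_num) i)) * u (Fin.castLE (by norm_num) i) :=
    fun i => mul_comm _ _
  simp only [this]
  ring

/-- The form as a linear map in the second variable. -/
def hl (u : V) : V →ₗ[ℂ] ℂ where
  toFun := herm u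
  map_add' := herm_add_right u
  map_smul' := herm_smul_right u

lemma herm_sub_right (u v w : V) : herm u (v - w) = herm u v - herm u w := (hl u).map_sub v w

lemma herm_sum_right {ι : Type} (s : Finset ι) (u : V) (f : ι → V) :
    herm u (∑ i ∈ s, f i) = ∑ i ∈ s, herm u (f i) := map_sum (hl u) f s

lemma herm_add_left (u v w : V) : herm (u + v) w = herm u w + herm v w := by
  rw [← herm_conj, herm_add_right, map_add, herm_conj, herm_conj]

lemma herm_sub_left (u v w : V) : herm (u - v) w = herm u w - herm v w := by
  rw [← herm_conj, herm_sub_right, map_sub, herm_conj, herm_conj]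

lemma herm_smul_left (c : ℂ) (u v : V) : herm (c • u) v = conj c * herm u v := by
  rw [← herm_conj, herm_smul_right, map_mul, herm_conj]

lemma herm_sum_left {ι : Type} (s : Finset ι) (f : ι → V) (v : V) :
    herm (∑ i ∈ s, f i) v = ∑ i ∈ s, herm (f i) v := by
  rw [← herm_conj, herm_sum_right, map_sum]; simp only [herm_conj]

lemma herm_nonpos (w : V) (h : w 13 = 0) : (herm w w).re ≤ 0 := by
  simp only [herm, h, map_zero, zero_mul, mul_zero, add_zero, Complex.neg_re, Complex.re_sum,
    Left.neg_nonpos_iff]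
  refine Finset.sum_nonneg fun i _ => ?_
  rw [← Complex.normSq_eq_conj_mul_self, Complex.ofReal_re]
  exact Complex.normSq_nonneg _

/-- Two positive vectors are never orthogonal: the signature is `(1,13)`. -/
lemma herm_ne_zero (u v : V) (hu : 0 < (herm u u).re) (hv : 0 < (herm v v).re) :
    herm u v ≠ 0 := by
  intro h
  have h' : herm v u = 0 := by rw [← herm_conj, h, map_zero]
  have hv13 : v 13 ≠ 0 := fun h0 => absurd (herm_nonpos v h0) (not_le.mpr hv)
  have hw := herm_nonpos (v 13 • u - u 13 • v) (by simp [mul_comm])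
  have e : herm (v 13 • u - u 13 • v) (v 13 • u - u 13 • v) =
      (Complex.normSq (v 13) : ℂ) * herm u u + (Complex.normSq (u 13) : ℂ) * herm v v := by
    simp only [herm_sub_left, herm_sub_right, herm_smul_left, herm_smul_right, h, h',
      Complex.normSq_eq_conj_mul_self]
    ring
  rw [e, Complex.add_re, Complex.re_ofReal_mul, Complex.re_ofReal_mul] at hw
  have h1 := mul_pos (Complex.normSq_pos.mpr hv13) hu
  have h2 := mul_nonneg (Complex.normSq_nonneg (u 13)) hv.le
  linarith

/-! ### Integer model of the 26 roots -/

abbrev Zw : Type := ℤ × ℤ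

/-- `(a, b) ↦ a + b ω`. -/
def toC : Zw →+ ℂ where
  toFun p := (p.1 : ℂ) + (p.2 : ℂ) * ω
  map_zero' := by simp
  map_add' p q := by simp; ring

def mz (p q : Zw) : Zw := (p.1 * q.1 - p.2 * q.2, p.1 * q.2 + p.2 * q.1 - p.2 * q.2)
def cz (p : Zw) : Zw := (p.1 - p.2, -p.2)

lemma toC_mz (p q : Zw) : toC (mz p q) = toC p * toC q := by
  simp only [toC, mz, AddMonoidHom.coe_mk, ZeroHom.coe_mk]
  push_cast
  linear_combination -(p.2 : ℂ) * q.2 * ω_sq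

lemma toC_cz (p : Zw) : toC (cz p) = conj (toC p) := by
  simp only [toC, cz, AddMonoidHom.coe_mk, ZeroHom.coe_mk, map_add, map_mul, conj_ω, map_intCast]
  push_cast
  ring

def hz (u v : Fin 14 → Zw) : Zw :=
  -(∑ i : Fin 12, mz (cz (u (Fin.castLE (by norm_num) i))) (v (Fin.castLE (by norm_num) i))) +
    mz (mz (cz (u 12)) (-1, -2)) (v 13) + mz (mz (cz (u 13)) (1, 2)) (v 12)

def toV (u : Fin 14 → Zw) : V := fun i => toC (u i)

lemma toC_θ : toC (1, 2) = θ := by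
  simp [toC, θ_eq]

lemma toC_θ' : toC (-1, -2) = conj θ := by
  simp [toC, conj_θ]; ring

lemma herm_toV (u v : Fin 14 → Zw) : herm (toV u) (toV v) = toC (hz u v) := by
  simp only [herm, hz, toV, map_add, map_neg, map_sum, toC_mz, toC_cz, toC_θ, toC_θ']

abbrev oo : Zw := (0, 0)
abbrev qz : Zw := (-1, 1)
abbrev nq : Zw := (1, -1)

def ptz : Fin 13 → Fin 14 → Zw :=
  ![![oo, oo, oo, oo, oo, oo, oo, oo, oo, oo, oo, oo, (1, 0), (-1, -1)],
    ![qz, oo, oo, oo, oo, oo, oo, oo, oo, oo, oo, oo, oo, oo],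
    ![oo, oo, oo, oo, qz, oo, oo, oo, oo, oo, oo, oo, oo, oo],
    ![oo, oo, oo, oo, oo, oo, oo, oo, qz, oo, oo, oo, oo, oo],
    ![oo, qz, oo, oo, oo, oo, oo, oo, oo, oo, oo, oo, oo, oo],
    ![oo, oo, oo, oo, oo, qz, oo, oo, oo, oo, oo, oo, oo, oo],
    ![oo, oo, oo, oo, oo, oo, oo, oo, oo, qz, oo, oo, oo, oo],
    ![oo, oo, oo, oo, oo, oo, oo, qz, oo, oo, oo, qz, (0, 1), (-1, -1)],
    ![oo, oo, oo, qz, oo, oo, oo, oo, oo, oo, oo, qz, (0, 1), (-1, -1)],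
    ![oo, oo, oo, qz, oo, oo, oo, qz, oo, oo, oo, oo, (0, 1), (-1, -1)],
    ![oo, oo, oo, qz, oo, oo, nq, qz, oo, oo, nq, qz, (0, 2), (-2, -2)],
    ![oo, oo, nq, qz, oo, oo, oo, qz, oo, oo, nq, qz, (0, 2), (-2, -2)],
    ![oo, oo, nq, qz, oo, oo, nq, qz, oo, oo, oo, qz, (0, 2), (-2, -2)]]

def lnz : Fin 13 → Fin 14 → Zw :=
  ![![oo, (1, 0), (1, 0), (-2, 0), oo, (1, 0), (1, 0), (-2, 0), oo, (1, 0), (1, 0), (-2, 0), (-2, 1), (-1, -2)],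
    ![(1, 0), oo, (1, 0), (-1, 0), oo, oo, oo, oo, oo, oo, oo, oo, (-1, 0), oo],
    ![oo, oo, oo, oo, (1, 0), oo, (1, 0), (-1, 0), oo, oo, oo, oo, (-1, 0), oo],
    ![oo, oo, oo, oo, oo, oo, oo, oo, (1, 0), oo, (1, 0), (-1, 0), (-1, 0), oo],
    ![(1, 0), (1, 0), (-1, 0), oo, oo, oo, oo, oo, oo, oo, oo, oo, oo, oo],
    ![oo, oo, oo, oo, (1, 0), (1, 0), (-1, 0), oo, oo, oo, oo, oo, oo, oo],
    ![oo, oo, oo, oo, oo, oo, oo, oo, (1, 0), (1, 0), (-1, 0), oo, oo, oo],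
    ![oo, (1, 0), (1, 0), (1, 0), oo, oo, oo, oo, oo, oo, oo, oo, oo, oo],
    ![oo, oo, oo, oo, oo, (1, 0), (1, 0), (1, 0), oo, oo, oo, oo, oo, oo],
    ![oo, oo, oo, oo, oo, oo, oo, oo, oo, (1, 0), (1, 0), (1, 0), oo, oo],
    ![oo, (1, 0), (1, 0), (-2, 0), (1, 0), oo, (1, 0), (-1, 0), (1, 0), oo, (1, 0), (-1, 0), qz, (-1, -2)],
    ![(1, 0), oo, (1, 0), (-1, 0), oo, (1, 0), (1, 0), (-2, 0), (1, 0), oo, (1, 0), (-1, 0), qz, (-1, -2)],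
    ![(1, 0), oo, (1, 0), (-1, 0), (1, 0), oo, (1, 0), (-1, 0), oo, (1, 0), (1, 0), (-2, 0), qz, (-1, -2)]]

lemma pt_eq (i : Fin 13) : pt i = toV (ptz i) := by
  funext k
  fin_cases i <;> fin_cases k <;>
    simp [pt, ptz, toV, toC, rA, rC1, rC2, rC3, rE1, rE2, rE3, rA1, rA2, rA3, rG1, rG2, rG3,
      qc_eq, ω_sq] <;> ring

lemma lnr_eq (i : Fin 13) : lnr i = toV (lnz i) := by
  funext k
  fin_cases i <;> fin_cases k <;>
    simp [lnr, lnz, toV, toC, rF, rB1, rB2, rB3, rD1, rD2, rD3, rF1, rF2, rF3, rZ1, rZ2, rZ3,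
      qc_eq, θ_eq] <;> ring

def tp : Fin 13 → Fin 13 := ![1, 2, 3, 10, 11, 12, 4, 6, 5, 7, 9, 8, 0]
def tl : Fin 13 → Fin 13 := ![4, 12, 11, 1, 2, 3, 7, 8, 9, 0, 6, 5, 10]

lemma gram_pp : ∀ i j, hz (ptz (tp i)) (ptz (tp j)) = hz (ptz i) (ptz j) := by decide +kernel
lemma gram_ll : ∀ i j, hz (lnz (tl i)) (lnz (tl j)) = hz (lnz i) (lnz j) := by decide +kernel
lemma gram_pl : ∀ i j, hz (ptz (tp i)) (lnz (tl j)) = hz (ptz i) (lnz j) := by decide +kernel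
lemma sum_pp : ∑ i, ∑ j, hz (ptz i) (ptz j) = (-39, 0) := by decide +kernel
lemma sum_ll : ∑ i, ∑ j, hz (lnz i) (lnz j) = (-39, 0) := by decide +kernel
lemma sum_pl : ∑ i, ∑ j, hz (ptz i) (lnz j) = (104, 52) := by decide +kernel


lemma diag_pp : ∀ i j, hz (ptz i) (ptz j) = if i = j then (-3, 0) else (0, 0) := by
  decide +kernel
lemma diag_ll : ∀ i j, hz (lnz i) (lnz j) = if i = j then (-3, 0) else (0, 0) := by
  decide +kernel

lemma pt_inj : Function.Injective pt := by
  intro i j h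
  by_contra hne
  have h1 : herm (pt i) (pt i) = herm (pt i) (pt j) := by rw [h]
  rw [pt_eq, pt_eq, herm_toV, herm_toV, diag_pp, diag_pp, if_pos rfl, if_neg hne] at h1
  simp [toC] at h1

lemma lnr_inj : Function.Injective lnr := by
  intro i j h
  by_contra hne
  have h1 : herm (lnr i) (lnr i) = herm (lnr i) (lnr j) := by rw [h]
  rw [lnr_eq, lnr_eq, herm_toV, herm_toV, diag_ll, diag_ll, if_pos rfl, if_neg hne] at h1
  simp [toC] at h1

lemma herm_expand (u v : V) : herm u v =
    -(conj (u 0) * v 0 + conj (u 1) * v 1 + conj (u 2) * v 2 + conj (u 3) * v 3 +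
      conj (u 4) * v 4 + conj (u 5) * v 5 + conj (u 6) * v 6 + conj (u 7) * v 7 +
      conj (u 8) * v 8 + conj (u 9) * v 9 + conj (u 10) * v 10 + conj (u 11) * v 11) +
    conj (u 12) * conj θ * v 13 + conj (u 13) * θ * v 12 := by
  simp only [herm, Fin.sum_univ_succ, Fin.sum_univ_zero]
  simp only [← add_assoc, add_zero]
  rfl

lemma conj_qc : conj qc = θ * ω := by
  rw [qc_eq, θ_eq]; simp [conj_ω]; linear_combination -2 * ω_sq

lemma qc_ne : qc ≠ 0 := by
  intro h
  have := conj_qc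
  rw [h, map_zero] at this
  exact mul_ne_zero θ_ne ω_ne this.symm

lemma hC1 (v : V) : herm rC1 v = -(θ * ω * v 0) := by simp [herm_expand, rC1, conj_qc]
lemma hC2 (v : V) : herm rC2 v = -(θ * ω * v 4) := by simp [herm_expand, rC2, conj_qc]
lemma hC3 (v : V) : herm rC3 v = -(θ * ω * v 8) := by simp [herm_expand, rC3, conj_qc]
lemma hE1 (v : V) : herm rE1 v = -(θ * ω * v 1) := by simp [herm_expand, rE1, conj_qc]
lemma hE2 (v : V) : herm rE2 v = -(θ * ω * v 5) := by simp [herm_expand, rE2, conj_qc]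
lemma hE3 (v : V) : herm rE3 v = -(θ * ω * v 9) := by simp [herm_expand, rE3, conj_qc]
lemma hD1 (v : V) : herm rD1 v = -(v 0 + v 1 - v 2) := by simp [herm_expand, rD1]; ring
lemma hD2 (v : V) : herm rD2 v = -(v 4 + v 5 - v 6) := by simp [herm_expand, rD2]; ring
lemma hD3 (v : V) : herm rD3 v = -(v 8 + v 9 - v 10) := by simp [herm_expand, rD3]; ring
lemma hF1 (v : V) : herm rF1 v = -(v 1 + v 2 + v 3) := by simp [herm_expand, rF1]
lemma hF2 (v : V) : herm rF2 v = -(v 5 + v 6 + v 7) := by simp [herm_expand, rF2]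
lemma hF3 (v : V) : herm rF3 v = -(v 9 + v 10 + v 11) := by simp [herm_expand, rF3]
lemma hB1 (v : V) : herm rB1 v = -(v 0 + v 2 - v 3) + θ * v 13 := by
  simp [herm_expand, rB1, θ_eq, conj_ω, conj_two]; ring
lemma hA (v : V) : herm rA v = -(θ * v 13) + ω * θ * v 12 := by
  simp [herm_expand, rA, θ_eq, conj_ω, conj_two]
  linear_combination (1 + 2 * ω) * v 12 * ω_sq

/-- All 26 roots in one family. -/
def R : Fin 13 ⊕ Fin 13 → V := Sum.elim pt lnr

lemma nondeg (v : V) (h : ∀ k, herm (R k) v = 0) : v = 0 := by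
  have c1 : herm rC1 v = 0 := h (Sum.inl 1)
  have c2 : herm rC2 v = 0 := h (Sum.inl 2)
  have c3 : herm rC3 v = 0 := h (Sum.inl 3)
  have e1 : herm rE1 v = 0 := h (Sum.inl 4)
  have e2 : herm rE2 v = 0 := h (Sum.inl 5)
  have e3 : herm rE3 v = 0 := h (Sum.inl 6)
  have a : herm rA v = 0 := h (Sum.inl 0)
  have b : herm rB1 v = 0 := h (Sum.inr 1)
  have d1 : herm rD1 v = 0 := h (Sum.inr 4)
  have d2 : herm rD2 v = 0 := h (Sum.inr 5)
  have d3 : herm rD3 v = 0 := h (Sum.inr 6)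
  have f1 : herm rF1 v = 0 := h (Sum.inr 7)
  have f2 : herm rF2 v = 0 := h (Sum.inr 8)
  have f3 : herm rF3 v = 0 := h (Sum.inr 9)
  simp only [hC1, hC2, hC3, hE1, hE2, hE3, hD1, hD2, hD3, hF1, hF2, hF3, hB1, hA] at *
  have v0 : v 0 = 0 := by simpa [θ_ne, ω_ne] using c1
  have v4 : v 4 = 0 := by simpa [θ_ne, ω_ne] using c2
  have v8 : v 8 = 0 := by simpa [θ_ne, ω_ne] using c3
  have v1 : v 1 = 0 := by simpa [θ_ne, ω_ne] using e1
  have v5 : v 5 = 0 := by simpa [θ_ne, ω_ne] using e2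
  have v9 : v 9 = 0 := by simpa [θ_ne, ω_ne] using e3
  have v2 : v 2 = 0 := by simpa [v0, v1] using d1
  have v6 : v 6 = 0 := by simpa [v4, v5] using d2
  have v10 : v 10 = 0 := by simpa [v8, v9] using d3
  have v3 : v 3 = 0 := by simpa [v1, v2] using f1
  have v7 : v 7 = 0 := by simpa [v5, v6] using f2
  have v11 : v 11 = 0 := by simpa [v9, v10] using f3
  have v13 : v 13 = 0 := by simpa [v0, v2, v3, θ_ne] using b
  have v12 : v 12 = 0 := by simpa [v13, θ_ne, ω_ne] using a
  funext k
  fin_cases k <;> assumption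

lemma spanR (v : V) : v ∈ Submodule.span ℂ (Set.range R) := by
  have hm : ∀ k, R k ∈ Submodule.span ℂ (Set.range R) := fun k =>
    Submodule.subset_span ⟨k, rfl⟩
  have sm : ∀ (c : ℂ) k, c • R k ∈ Submodule.span ℂ (Set.range R) := fun c k =>
    Submodule.smul_mem _ _ (hm k)
  have key : v =
      (ω * v 13) • R (Sum.inl 0) + (ω * v 13 - v 12) • R (Sum.inr 1) +
      (v 3 + (ω * v 13 - v 12)) • R (Sum.inr 7) +
      (v 3 + 2 * (ω * v 13 - v 12) - v 2) • R (Sum.inr 4) +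
      ((v 1 - v 3 - (ω * v 13 - v 12) - (v 3 + 2 * (ω * v 13 - v 12) - v 2)) * qc⁻¹) •
        R (Sum.inl 4) +
      ((v 0 - (ω * v 13 - v 12) - (v 3 + 2 * (ω * v 13 - v 12) - v 2)) * qc⁻¹) •
        R (Sum.inl 1) +
      v 7 • R (Sum.inr 8) + (v 7 - v 6) • R (Sum.inr 5) +
      ((v 5 - v 7 - (v 7 - v 6)) * qc⁻¹) • R (Sum.inl 5) +
      ((v 4 - (v 7 - v 6)) * qc⁻¹) • R (Sum.inl 2) +
      v 11 • R (Sum.inr 9) + (v 11 - v 10) • R (Sum.inr 6) +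
      ((v 9 - v 11 - (v 11 - v 10)) * qc⁻¹) • R (Sum.inl 6) +
      ((v 8 - (v 11 - v 10)) * qc⁻¹) • R (Sum.inl 3) := by
    have hq := inv_mul_cancel₀ qc_ne
    funext k
    fin_cases k <;>
      simp [R, pt, lnr, rA, rC1, rC2, rC3, rE1, rE2, rE3, rB1, rD1, rD2, rD3, rF1, rF2, rF3,
        mul_assoc, hq] <;> try ring
    linear_combination (-v 13) * (ω - 1) * ω_sq
  rw [key]
  repeat' first | exact sm _ _ | apply Submodule.add_mem

/-! ### The lattice -/

lemma EisP_add {x y : ℂ} (hx : EisP x) (hy : EisP y) : EisP (x + y) := by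
  obtain ⟨a, b, rfl⟩ := hx
  obtain ⟨c, d, rfl⟩ := hy
  exact ⟨a + c, b + d, by push_cast; ring⟩

lemma EisP_mul {x y : ℂ} (hx : EisP x) (hy : EisP y) : EisP (x * y) := by
  obtain ⟨a, b, rfl⟩ := hx
  obtain ⟨c, d, rfl⟩ := hy
  exact ⟨a * c - b * d, a * d + b * c - b * d, by
    push_cast; linear_combination (b : ℂ) * d * ω_sq⟩

lemma EisP_int (n : ℤ) : EisP (n : ℂ) := ⟨n, 0, by simp⟩

/-- The Eisenstein integers as a subring. -/
def E : Subring ℂ where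
  carrier := {z | EisP z}
  mul_mem' := EisP_mul
  one_mem' := ⟨1, 0, by simp⟩
  add_mem' := EisP_add
  zero_mem' := ⟨0, 0, by simp⟩
  neg_mem' := by
    rintro x ⟨a, b, rfl⟩
    exact ⟨-a, -b, by push_cast; ring⟩

lemma ωE : ω ∈ E := ⟨0, 1, by simp⟩
lemma θE : θ ∈ E := ⟨1, 2, by rw [θ_eq]; push_cast; ring⟩
lemma conjE {x : ℂ} (hx : x ∈ E) : conj x ∈ E := by
  obtain ⟨a, b, rfl⟩ := hx
  exact ⟨a - b, -b, by simp [conj_ω]; ring⟩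

/-- The ideal `θ ℰ`. -/
def T : AddSubgroup ℂ where
  carrier := {z | ∃ e ∈ E, z = θ * e}
  add_mem' := by
    rintro x y ⟨e, he, rfl⟩ ⟨f, hf, rfl⟩
    exact ⟨e + f, E.add_mem he hf, by ring⟩
  zero_mem' := ⟨0, E.zero_mem, by simp⟩
  neg_mem' := by
    rintro x ⟨e, he, rfl⟩
    exact ⟨-e, E.neg_mem he, by ring⟩

lemma T_mul {c x : ℂ} (hc : c ∈ E) (hx : x ∈ T) : c * x ∈ T := by
  obtain ⟨e, he, rfl⟩ := hx
  exact ⟨c * e, E.mul_mem hc he, by ring⟩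

lemma T_le {x : ℂ} (hx : x ∈ T) : x ∈ E := by
  obtain ⟨e, he, rfl⟩ := hx
  exact E.mul_mem θE he

lemma T_three {x : ℂ} (hx : x ∈ E) : 3 * x ∈ T :=
  ⟨-(θ * x), E.neg_mem (E.mul_mem θE hx), by linear_combination x * θ_sq⟩

lemma T_conj {x : ℂ} (hx : x ∈ T) : conj x ∈ T := by
  obtain ⟨e, he, rfl⟩ := hx
  refine ⟨-conj e, E.neg_mem (conjE he), ?_⟩
  rw [map_mul, conj_θ, θ_eq]; ring

lemma T_one_sub : ω - 1 ∈ T :=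
  ⟨-ω ^ 2, E.neg_mem (E.pow_mem ωE 2), by rw [← qc_eq, qc]; ring⟩

lemma E_int {x : ℂ} (hx : x ∈ E) : ∃ n : ℤ, x - n ∈ T := by
  obtain ⟨a, b, rfl⟩ := hx
  refine ⟨a + b, ?_⟩
  have := T_mul (show (b : ℂ) ∈ E from EisP_int b) T_one_sub
  convert this using 1
  push_cast; ring

lemma T_iff (x : ℂ) : (∃ a b : ℤ, x = θ * ((a : ℂ) + (b : ℂ) * ω)) ↔ x ∈ T := by
  constructor
  · rintro ⟨a, b, h⟩; exact ⟨_, ⟨a, b, rfl⟩, h⟩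
  · rintro ⟨_, ⟨a, b, rfl⟩, h⟩; exact ⟨a, b, h⟩

lemma E8_iff (w : Fin 4 → ℂ) : inE8 w ↔
    w 0 ∈ E ∧ w 1 ∈ E ∧ w 0 + w 1 - w 2 ∈ T ∧ w 1 + w 2 + w 3 ∈ T := by
  simp only [inE8, T_iff]
  constructor
  · rintro ⟨h, s, t, hst⟩
    have h0 := hst 0
    have h1 := hst 1
    have h2 := hst 2
    have h3 := hst 3
    simp [tet1, tet2] at h0 h1 h2 h3
    refine ⟨h 0, h 1, ?_, ?_⟩
    · convert T.add_mem (T.sub_mem (T.add_mem h0 h1) h2) (T_three (EisP_int s)) using 1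
      ring
    · convert T.add_mem (T.add_mem (T.add_mem h1 h2) h3) (T_three (EisP_int t)) using 1
      ring
  · rintro ⟨h0, h1, hd, hf⟩
    have h2 : w 2 ∈ E := by
      convert E.sub_mem (E.add_mem h0 h1) (T_le hd) using 1; ring
    have h3 : w 3 ∈ E := by
      convert E.sub_mem (T_le hf) (E.add_mem h1 h2) using 1; ring
    refine ⟨fun i => by fin_cases i <;> assumption, ?_⟩
    obtain ⟨s, hs⟩ := E_int h0
    obtain ⟨y, hy⟩ := E_int h1
    refine ⟨s, y - s, fun i => ?_⟩
    have S3 := T_three (EisP_int s)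
    have Y3 := T_three (EisP_int y)
    fin_cases i <;> simp [tet1, tet2]
    · exact hs
    · exact hy
    · convert T.add_mem (T.sub_mem (T.add_mem hs hy) hd) S3 using 1; ring
    · convert T.add_mem (T.sub_mem (T.sub_mem (T.sub_mem hf (T.sub_mem (T.add_mem hs hy) hd)) hy)
        Y3) (T.zero_mem) using 1
      ring

lemma block_T {w z : Fin 4 → ℂ} (hw : inE8 w) (hz : inE8 z) :
    conj (w 0) * z 0 + conj (w 1) * z 1 + conj (w 2) * z 2 + conj (w 3) * z 3 ∈ T := by
  have hwE : ∀ i, conj (w i) ∈ E := fun i => conjE (hw.1 i)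
  have hzE : ∀ i, z i ∈ E := hz.1
  obtain ⟨-, -, hd, hf⟩ := (E8_iff w).1 hw
  obtain ⟨-, -, hd', hf'⟩ := (E8_iff z).1 hz
  have hd := T_conj hd
  have hf := T_conj hf
  simp only [map_add, map_sub] at hd hf
  have t1 := T_mul (E.add_mem (hwE 0) (hwE 1)) hd'
  have t2 := T_mul (hzE 2) hd
  have t3 := T_mul (hzE 3) hf
  have t4 := T_mul (E.add_mem (hwE 1) (hwE 2)) hf'
  have t5 := T_mul (E.add_mem (E.add_mem (hwE 0) (hwE 1)) (hwE 1)) hd'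
  have t6 := T_mul (E.add_mem (hzE 1) (hzE 2)) hd
  have t7 := T_three (E.add_mem (E.add_mem (E.mul_mem (hwE 0) (hzE 0)) (E.mul_mem (hwE 0) (hzE 1)))
    (E.add_mem (E.mul_mem (hwE 1) (hzE 0))
      (E.add_mem (E.mul_mem (hwE 1) (hzE 1)) (E.mul_mem (hwE 1) (hzE 1)))))
  convert T.sub_mem (T.sub_mem (T.sub_mem (T.add_mem (T.sub_mem (T.sub_mem t7 t1) t2) t3) t4) t5) t6
    using 1
  ring

lemma Lset_iff (v : V) : v ∈ Lset ↔
    (inE8 ![v 0, v 1, v 2, v 3] ∧ inE8 ![v 4, v 5, v 6, v 7] ∧ inE8 ![v 8, v 9, v 10, v 11]) ∧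
      v 12 ∈ E ∧ v 13 ∈ E := by
  have h0 : (fun i : Fin 4 => v ⟨4 * ((0 : Fin 3) : ℕ) + (i : ℕ), by
      have hi := i.isLt; simp; omega⟩) = ![v 0, v 1, v 2, v 3] := by
    funext i; fin_cases i <;> rfl
  have h1 : (fun i : Fin 4 => v ⟨4 * ((1 : Fin 3) : ℕ) + (i : ℕ), by
      have hi := i.isLt; simp; omega⟩) = ![v 4, v 5, v 6, v 7] := by
    funext i; fin_cases i <;> rfl
  have h2 : (fun i : Fin 4 => v ⟨4 * ((2 : Fin 3) : ℕ) + (i : ℕ), by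
      have hi := i.isLt; simp; omega⟩) = ![v 8, v 9, v 10, v 11] := by
    funext i; fin_cases i <;> rfl
  rw [← h0, ← h1, ← h2]
  constructor
  · rintro ⟨h, h'⟩
    exact ⟨⟨h 0, h 1, h 2⟩, h'⟩
  · rintro ⟨⟨a, b, c⟩, h'⟩
    refine ⟨fun k => ?_, h'⟩
    fin_cases k
    · exact a
    · exact b
    · exact c

lemma herm_T {u v : V} (hu : u ∈ Lset) (hv : v ∈ Lset) : herm u v ∈ T := by
  obtain ⟨⟨a, b, c⟩, d, e⟩ := (Lset_iff u).1 hu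
  obtain ⟨⟨a', b', c'⟩, d', e'⟩ := (Lset_iff v).1 hv
  have A := block_T a a'
  have B := block_T b b'
  have C := block_T c c'
  simp at A B C
  have tθ : θ ∈ T := ⟨1, E.one_mem, by simp⟩
  have D := T_mul (E.mul_mem (conjE d) e') (T_conj tθ)
  have F := T_mul (E.mul_mem (conjE e) d') tθ
  rw [herm_expand]
  convert T.add_mem (T.add_mem (T.neg_mem (T.add_mem (T.add_mem A B) C)) D) F using 1
  ring

def sz (p : Zw) : ℤ := p.1 + p.2

lemma toC_E (p : Zw) : toC p ∈ E := ⟨p.1, p.2, rfl⟩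

lemma toC_T {p : Zw} (h : (3 : ℤ) ∣ sz p) : toC p ∈ T := by
  obtain ⟨n, hn⟩ := h
  have h1 := T_three (EisP_int n)
  have h2 := T_mul (EisP_int p.2) T_one_sub
  convert T.add_mem h1 h2 using 1
  have : (p.1 : ℂ) + p.2 = 3 * n := by exact_mod_cast hn
  show (p.1 : ℂ) + p.2 * ω = _
  linear_combination this

abbrev okz (a b c d : Zw) : Prop := (3 : ℤ) ∣ sz (a + b - c) ∧ (3 : ℤ) ∣ sz (b + c + d)

lemma okz_E8 {a b c d : Zw} (h : okz a b c d) : inE8 ![toC a, toC b, toC c, toC d] := by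
  rw [E8_iff]
  have h1 := toC_T h.1
  have h2 := toC_T h.2
  simp only [map_add, map_sub] at h1 h2
  exact ⟨toC_E _, toC_E _, h1, h2⟩

abbrev okv (u : Fin 14 → Zw) : Prop :=
  okz (u 0) (u 1) (u 2) (u 3) ∧ okz (u 4) (u 5) (u 6) (u 7) ∧ okz (u 8) (u 9) (u 10) (u 11)

lemma okv_L {u : Fin 14 → Zw} (h : okv u) : toV u ∈ Lset :=
  (Lset_iff _).2 ⟨⟨okz_E8 h.1, okz_E8 h.2.1, okz_E8 h.2.2⟩, toC_E _, toC_E _⟩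

lemma ok_pt : ∀ i, okv (ptz i) := by decide +kernel
lemma ok_ln : ∀ i, okv (lnz i) := by decide +kernel

lemma R_L (k : Fin 13 ⊕ Fin 13) : R k ∈ Lset := by
  rcases k with i | i
  · rw [R, Sum.elim_inl, pt_eq]; exact okv_L (ok_pt i)
  · rw [R, Sum.elim_inr, lnr_eq]; exact okv_L (ok_ln i)

lemma E_of_C {x : ℂ} (h : -(θ * ω * x) ∈ T) : x ∈ E := by
  obtain ⟨e, he, h⟩ := h
  have h1 : -(ω * x) = e := mul_left_cancel₀ θ_ne (by linear_combination h)
  have h2 : x = (1 + ω) * e := by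
    linear_combination (1 + ω) * h1 + x * ω_sq
  rw [h2]
  exact E.mul_mem (E.add_mem E.one_mem ωE) he

lemma T_neg_iff {x : ℂ} (h : -x ∈ T) : x ∈ T := by simpa using T.neg_mem h

lemma Lset_iff_R (v : V) : v ∈ Lset ↔ ∀ k, herm (R k) v ∈ T := by
  refine ⟨fun h k => herm_T (R_L k) h, fun h => ?_⟩
  have c1 : herm rC1 v ∈ T := h (Sum.inl 1)
  have c2 : herm rC2 v ∈ T := h (Sum.inl 2)
  have c3 : herm rC3 v ∈ T := h (Sum.inl 3)
  have e1 : herm rE1 v ∈ T := h (Sum.inl 4)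
  have e2 : herm rE2 v ∈ T := h (Sum.inl 5)
  have e3 : herm rE3 v ∈ T := h (Sum.inl 6)
  have a : herm rA v ∈ T := h (Sum.inl 0)
  have b : herm rB1 v ∈ T := h (Sum.inr 1)
  have d1 : herm rD1 v ∈ T := h (Sum.inr 4)
  have d2 : herm rD2 v ∈ T := h (Sum.inr 5)
  have d3 : herm rD3 v ∈ T := h (Sum.inr 6)
  have f1 : herm rF1 v ∈ T := h (Sum.inr 7)
  have f2 : herm rF2 v ∈ T := h (Sum.inr 8)
  have f3 : herm rF3 v ∈ T := h (Sum.inr 9)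
  rw [hC1] at c1
  rw [hC2] at c2
  rw [hC3] at c3
  rw [hE1] at e1
  rw [hE2] at e2
  rw [hE3] at e3
  rw [hD1] at d1
  rw [hD2] at d2
  rw [hD3] at d3
  rw [hF1] at f1
  rw [hF2] at f2
  rw [hF3] at f3
  rw [hB1] at b
  rw [hA] at a
  have v0 := E_of_C c1
  have v1 := E_of_C e1
  have dd := T_neg_iff d1
  have ff := T_neg_iff f1
  have v13T : θ * v 13 ∈ T := by
    have h3 : 3 * v 0 ∈ T := T_three v0
    have v2 : v 2 ∈ E := by
      convert E.sub_mem (E.add_mem v0 v1) (T_le dd) using 1; ring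
    have h3' : 3 * v 2 ∈ T := T_three v2
    -- v 0 + v 2 - v 3 = (v 0 + v 1 - v 2) - (v 1 + v 2 + v 3) + 3 * v 2
    convert T.add_mem b (T.add_mem (T.sub_mem dd ff) h3') using 1
    ring
  have v13 : v 13 ∈ E := by
    obtain ⟨e, he, h⟩ := v13T
    rwa [mul_left_cancel₀ θ_ne h]
  have v12 : v 12 ∈ E := by
    apply E_of_C
    convert T.neg_mem (T.add_mem a v13T) using 1
    ring
  refine (Lset_iff v).2 ⟨⟨?_, ?_, ?_⟩, v12, v13⟩
  · exact (E8_iff _).2 ⟨v0, v1, dd, ff⟩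
  · exact (E8_iff _).2 ⟨E_of_C c2, E_of_C e2, T_neg_iff d2, T_neg_iff f2⟩
  · exact (E8_iff _).2 ⟨E_of_C c3, E_of_C e3, T_neg_iff d3, T_neg_iff f3⟩

/-! ### A Singer cycle in `G` -/

/-- The permutation of the 26 roots. -/
def pm : Fin 13 ⊕ Fin 13 → Fin 13 ⊕ Fin 13 := Sum.map tp tl

lemma tp_surj : ∀ i, ∃ j, tp j = i := by decide
lemma tl_surj : ∀ i, ∃ j, tl j = i := by decide

lemma tp_trans : ∀ i, ∃ n : ℕ, tp^[n] 0 = i := by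
  have h : ∀ i, ∃ n : Fin 13, tp^[(n : ℕ)] 0 = i := by decide +kernel
  intro i
  obtain ⟨n, hn⟩ := h i
  exact ⟨n, hn⟩

lemma pm_surj (k : Fin 13 ⊕ Fin 13) : ∃ l, pm l = k := by
  rcases k with i | i
  · obtain ⟨j, rfl⟩ := tp_surj i; exact ⟨Sum.inl j, rfl⟩
  · obtain ⟨j, rfl⟩ := tl_surj i; exact ⟨Sum.inr j, rfl⟩

lemma gram (k l : Fin 13 ⊕ Fin 13) : herm (R (pm k)) (R (pm l)) = herm (R k) (R l) := by
  have pl : ∀ i j, herm (pt (tp i)) (lnr (tl j)) = herm (pt i) (lnr j) := fun i j => by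
    simp only [pt_eq, lnr_eq, herm_toV, gram_pl]
  rcases k with i | i <;> rcases l with j | j <;> simp only [R, pm, Sum.map_inl, Sum.map_inr,
    Sum.elim_inl, Sum.elim_inr]
  · simp only [pt_eq, herm_toV, gram_pp]
  · exact pl i j
  · rw [← herm_conj, pl, herm_conj]
  · simp only [lnr_eq, herm_toV, gram_ll]

lemma exists_g : ∃ g : V ≃ₗ[ℂ] V, g ∈ Gsub ∧ ∀ i, g (pt i) = pt (tp i) := by
  have hsurj : LinearMap.range (Fintype.linearCombination ℂ R) = ⊤ := by
    rw [Fintype.range_linearCombination, Submodule.eq_top_iff']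
    exact spanR
  obtain ⟨s, hs⟩ := (Fintype.linearCombination ℂ R).exists_rightInverse_of_surjective hsurj
  have hs' : ∀ v, ∑ k, s v k • R k = v := fun v => by
    have := LinearMap.congr_fun hs v
    simpa [Fintype.linearCombination_apply] using this
  let g₀ : V →ₗ[ℂ] V := (Fintype.linearCombination ℂ (R ∘ pm)).comp s
  have g₀_def : ∀ v, g₀ v = ∑ k, s v k • R (pm k) := fun v => by
    simp [g₀, Fintype.linearCombination_apply]
  have key : ∀ k v, herm (R (pm k)) (g₀ v) = herm (R k) v := by
    intro k v
    conv_rhs => rw [← hs' v]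
    rw [g₀_def, herm_sum_right, herm_sum_right]
    exact Finset.sum_congr rfl fun l _ => by rw [herm_smul_right, herm_smul_right, gram]
  have hroot : ∀ k, g₀ (R k) = R (pm k) := by
    intro k
    rw [← sub_eq_zero]
    apply nondeg
    intro l
    obtain ⟨l, rfl⟩ := pm_surj l
    rw [herm_sub_right, key, gram, sub_self]
  have hh : ∀ u v, herm (g₀ u) (g₀ v) = herm u v := by
    intro u v
    conv_rhs => rw [← hs' u]
    rw [g₀_def u, herm_sum_left, herm_sum_left]
    exact Finset.sum_congr rfl fun l _ => by rw [herm_smul_left, herm_smul_left, key]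
  have hinj : Function.Injective g₀ := by
    rw [injective_iff_map_eq_zero]
    intro v hv
    apply nondeg
    intro k
    rw [← key, hv, ← zero_smul ℂ (0 : V), herm_smul_right, zero_mul]
  let g : V ≃ₗ[ℂ] V := LinearEquiv.ofInjectiveEndo g₀ hinj
  have gg : ∀ v, g v = g₀ v := fun v => rfl
  have hp : ∀ i, g (pt i) = pt (tp i) := fun i => hroot (Sum.inl i)
  have hl : ∀ i, g (lnr i) = lnr (tl i) := fun i => hroot (Sum.inr i)
  refine ⟨g, ⟨⟨fun v => ?_, hh⟩, ?_, ?_⟩, hp⟩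
  · rw [Lset_iff_R, Lset_iff_R]
    constructor
    · intro h k
      obtain ⟨k, rfl⟩ := pm_surj k
      rw [gg, key]; exact h k
    · intro h k
      rw [← key, ← gg]; exact h _
  · ext x
    constructor
    · rintro ⟨_, ⟨i, rfl⟩, rfl⟩; exact ⟨tp i, (hp i).symm⟩
    · rintro ⟨i, rfl⟩
      obtain ⟨j, rfl⟩ := tp_surj i
      exact ⟨pt j, ⟨j, rfl⟩, hp j⟩
  · ext x
    constructor
    · rintro ⟨_, ⟨i, rfl⟩, rfl⟩; exact ⟨tl i, (hl i).symm⟩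
    · rintro ⟨i, rfl⟩
      obtain ⟨j, rfl⟩ := tl_surj i
      exact ⟨lnr j, ⟨j, rfl⟩, hl j⟩

/-! ### The Weyl vector -/

lemma perm_sum (f : Fin 13 → V) (hf : Function.Injective f) (g : V ≃ₗ[ℂ] V)
    (h : (⇑g) '' Set.range f = Set.range f) : g (∑ i, f i) = ∑ i, f i := by
  have hex : ∀ i, ∃ j, f j = g (f i) := fun i => by
    have : g (f i) ∈ Set.range f := by rw [← h]; exact ⟨f i, ⟨i, rfl⟩, rfl⟩
    exact this
  choose e he using hex
  have hinj : Function.Injective e := by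
    intro i j hij
    apply hf
    apply g.injective
    rw [← he, ← he, hij]
  rw [map_sum, ← (Finite.injective_iff_bijective.mp hinj).sum_comp f]
  exact Finset.sum_congr rfl fun i _ => (he i).symm

lemma Gsub_ρ (g : V ≃ₗ[ℂ] V) (hg : g ∈ Gsub) : g ρbar = ρbar := by
  obtain ⟨-, h1, h2⟩ := hg
  rw [ρbar, map_smul, map_add, map_smul, perm_sum pt pt_inj g h1, perm_sum lnr lnr_inj g h2]

lemma herm_ρ_pos : 0 < (herm ρbar ρbar).re := by
  have hpp : herm (∑ i, pt i) (∑ i, pt i) = -39 := by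
    rw [herm_sum_left]
    simp only [herm_sum_right, pt_eq, herm_toV, ← map_sum, sum_pp]
    simp [toC]
  have hll : herm (∑ i, lnr i) (∑ i, lnr i) = -39 := by
    rw [herm_sum_left]
    simp only [herm_sum_right, lnr_eq, herm_toV, ← map_sum, sum_ll]
    simp [toC]
  have hpl : herm (∑ i, pt i) (∑ i, lnr i) = 104 + 52 * ω := by
    rw [herm_sum_left]
    simp only [herm_sum_right, pt_eq, lnr_eq, herm_toV, ← map_sum, sum_pl]
    simp [toC]
  have hlp : herm (∑ i, lnr i) (∑ i, pt i) = 52 - 52 * ω := by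
    rw [← herm_conj, hpl]
    simp only [map_add, map_mul, conj_ω, map_ofNat]
    ring
  have h : herm ρbar ρbar = (((104 * Real.sqrt 3 - 78) / 676 : ℝ) : ℂ) := by
    simp only [ρbar, herm_smul_left, herm_smul_right, herm_add_left, herm_add_right, hpp, hll, hpl,
      hlp, map_inv₀, map_ofNat]
    rw [ω_eq, ξ_eq]
    simp only [map_sub, map_mul, Complex.conj_ofReal, Complex.conj_I, map_div₀, map_one, conj_two]
    push_cast
    have a := s3
    have b := Complex.I_sq
    ring_nf
    simp only [a, b]
    ring
  rw [h, Complex.ofReal_re]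
  have : (1 : ℝ) < Real.sqrt 3 := by rw [Real.lt_sqrt] <;> norm_num
  apply div_pos <;> linarith

/-- The positive-norm complex line spanned by the Weyl vector `ρ̄` is the unique point
of the complex hyperbolic space `ℂH¹³` fixed by the group `Q = ⟨G, σ⟩`. -/
theorem stmt14 (σ : V ≃ₗ[ℂ] V) (hσ : SigmaSpec σ) :
    0 < (herm ρbar ρbar).re ∧
    (∀ q ∈ QGroup σ, ∃ c : ℂ, q ρbar = c • ρbar) ∧
    (∀ v : V, 0 < (herm v v).re →
      (∀ q ∈ QGroup σ, ∃ c : ℂ, q v = c • v) → ∃ c : ℂ, c ≠ 0 ∧ v = c • ρbar) := by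
  have hρ := herm_ρ_pos
  obtain ⟨hσL, δ, -, hδ1, hδ2⟩ := hσ
  have hσρ : σ ρbar = ξ • ρbar := by
    have h1 : σ (∑ i, pt i) = (-ω) • ∑ i, lnr i := by
      rw [map_sum, Finset.smul_sum, ← Equiv.sum_comp δ fun i => (-ω) • lnr i]
      exact Finset.sum_congr rfl fun i _ => hδ1 i
    have h2 : σ (∑ i, lnr i) = ∑ i, pt i := by
      rw [map_sum, ← Equiv.sum_comp δ fun i => σ (lnr i)]
      exact Finset.sum_congr rfl fun i _ => hδ2 i
    rw [ρbar, map_smul, map_add, map_smul, h1, h2, ← ξ_sq]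
    module
  refine ⟨hρ, ?_, ?_⟩
  · intro q hq
    have key : ∃ c : ℂ, c ≠ 0 ∧ q ρbar = c • ρbar := by
      unfold QGroup at hq
      induction hq using Subgroup.closure_induction with
      | mem x hx =>
        rcases hx with hx | hx
        · rw [Set.mem_singleton_iff.mp hx]
          exact ⟨ξ, ξ_ne, hσρ⟩
        · exact ⟨1, one_ne_zero, by rw [one_smul]; exact Gsub_ρ x hx⟩
      | one => exact ⟨1, one_ne_zero, by rw [one_smul]; rfl⟩
      | mul x y _ _ hx hy =>
        obtain ⟨c, hc, h⟩ := hx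
        obtain ⟨d, hd, h'⟩ := hy
        refine ⟨c * d, mul_ne_zero hc hd, ?_⟩
        rw [LinearEquiv.mul_apply, h', map_smul, h, smul_smul, mul_comm]
      | inv x _ hx =>
        obtain ⟨c, hc, h⟩ := hx
        refine ⟨c⁻¹, inv_ne_zero hc, ?_⟩
        apply x.injective
        rw [map_smul, h, smul_smul, inv_mul_cancel₀ hc, one_smul]
        exact x.apply_symm_apply ρbar
    obtain ⟨c, -, h⟩ := key
    exact ⟨c, h⟩
  · intro v hv hfix
    have hne := herm_ne_zero ρbar v hρ hv
    obtain ⟨g, hgG, hg⟩ := exists_g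
    -- the eigenvalue of `g` on `v` is `1`
    have hgv : g v = v := by
      obtain ⟨c, hc⟩ := hfix g (Subgroup.subset_closure (Or.inr hgG))
      have h := hgG.1.2 ρbar v
      rw [Gsub_ρ g hgG, hc, herm_smul_right] at h
      rw [hc, mul_eq_right₀ hne |>.mp h, one_smul]
    -- the eigenvalue of `σ` on `v` is `ξ`
    have hσv : σ v = ξ • v := by
      obtain ⟨c, hc⟩ := hfix σ (Subgroup.subset_closure (Or.inl rfl))
      have h := hσL.2 ρbar v
      rw [hσρ, hc, herm_smul_right, herm_smul_left, ← mul_assoc, mul_eq_right₀ hne] at h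
      have : c = ξ := by linear_combination ξ * h - c * ξ_conj
      rw [hc, this]
    have gen : ∀ w : V, g w = w → σ w = ξ • w → ∃ a : ℂ, ∀ k,
        herm (R k) w = Sum.elim (fun _ => a) (fun _ => -(conj ω)⁻¹ * ξ⁻¹ * a) k := by
      intro w h1 h2
      have hp : ∀ i, herm (pt i) w = herm (pt 0) w := by
        have hstep : ∀ i, herm (pt (tp i)) w = herm (pt i) w := by
          intro i
          have h := hgG.1.2 (pt i) w
          rw [hg, h1] at h
          exact h
        have hit : ∀ n : ℕ, herm (pt (tp^[n] 0)) w = herm (pt 0) w := by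
          intro n
          induction n with
          | zero => rfl
          | succ n ih => rw [Function.iterate_succ_apply', hstep, ih]
        intro i
        obtain ⟨n, rfl⟩ := tp_trans i
        exact hit n
      refine ⟨herm (pt 0) w, ?_⟩
      rintro (i | i)
      · exact hp i
      · obtain ⟨j, rfl⟩ := δ.surjective i
        have h := hσL.2 (pt j) w
        rw [hδ1, h2, herm_smul_left, herm_smul_right, hp] at h
        have hcω : conj ω ≠ 0 := (map_ne_zero _).mpr ω_ne
        have hx := ξ_ne
        simp only [R, Sum.elim_inr, ← h, map_neg]
        field_simp
    obtain ⟨a, ha⟩ := gen v hgv hσv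
    obtain ⟨b, hb⟩ := gen ρbar (Gsub_ρ g hgG) hσρ
    have hρ0 : ρbar ≠ 0 := by
      intro h
      apply hne
      rw [h, ← zero_smul ℂ (0 : V), herm_smul_left]; simp
    have hv0 : v ≠ 0 := by
      intro h
      apply hne
      rw [h, ← zero_smul ℂ (0 : V), herm_smul_right]; simp
    have hb0 : b ≠ 0 := by
      rintro rfl
      apply hρ0
      apply nondeg
      rintro (k | k) <;> rw [hb] <;> simp
    have hz : b • v - a • ρbar = 0 := by
      apply nondeg
      intro k
      rw [herm_sub_right, herm_smul_right, herm_smul_right, ha, hb]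
      rcases k with k | k <;> simp <;> ring
    have hva : v = (b⁻¹ * a) • ρbar := by
      rw [mul_smul, ← sub_eq_zero.mp hz, smul_smul, inv_mul_cancel₀ hb0, one_smul]
    refine ⟨b⁻¹ * a, ?_, hva⟩
    intro h0
    rw [h0, zero_smul] at hva
    exact hv0 hva

end Bimonster
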